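/- Let 0 < a ≤ 2√2 - 2. Then for every z ∈ [-a, 2] one has |g_a(z)| ≤ 1, and consequently |f_a(z)| ≤ |z| for every z ∈ [-a, 2]. -/

import Mathlib

/-!
Since `g_a(z) = 1 - (z + a)(2 - z)`, the upper bound `g_a ≤ 1` on `[-a, 2]` is immediate. The
minimum of `g_a`, at the midpoint of the interval, is `1 - (a + 2)² / 4`, and this is at least `-1`
exactly when `(a + 2)² ≤ 8`, which for `a > 0` is the condition `a ≤ 2√2 - 2`. The bound on `f_a` follows by
multiplying by `|z|`.
-/

/-- `g_a(z) = z^2 + (a-2)z + 1 - 2a`. -/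
noncomputable def ga (a z : ℝ) : ℝ := z ^ 2 + (a - 2) * z + 1 - 2 * a

/-- The cubic map `f_a(z) = z * g_a(z)`. -/
noncomputable def fa (a z : ℝ) : ℝ := z * ga a z

/-- For `0 < a ≤ 2√2 - 2`: every `z ∈ [-a, 2]` satisfies `|g_a(z)| ≤ 1`, and
consequently `|f_a(z)| ≤ |z|`. -/
theorem cubic_contraction (a : ℝ) (ha₀ : 0 < a) (ha₁ : a ≤ 2 * Real.sqrt 2 - 2) :
    (∀ z ∈ Set.Icc (-a) (2 : ℝ), |ga a z| ≤ 1) ∧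
    (∀ z ∈ Set.Icc (-a) (2 : ℝ), |fa a z| ≤ |z|) := by
  have hbound : ∀ z ∈ Set.Icc (-a) (2 : ℝ), |ga a z| ≤ 1 := by
    rintro z ⟨hz₁, hz₂⟩
    -- Half the distance between the roots `-a` and `2` of `g_a - 1` is at most `√2`.
    have hsq : (a + 2) ^ 2 ≤ 8 := by
      have h2 : Real.sqrt 2 ^ 2 = 2 := Real.sq_sqrt (by norm_num)
      nlinarith [Real.sqrt_nonneg 2]
    rw [abs_le]
    unfold ga
    constructor
    · -- Complete the square: `g_a(z) = 1 - (a + 2)² / 4 + (z - (2 - a) / 2)²`.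
      nlinarith [sq_nonneg (z - (2 - a) / 2)]
    · -- Factor: `g_a(z) = 1 - (z + a) * (2 - z)`.
      nlinarith [mul_nonneg (by linarith : 0 ≤ z + a) (by linarith : 0 ≤ 2 - z)]
  refine ⟨hbound, fun z hz => ?_⟩
  rw [fa, abs_mul]
  exact mul_le_of_le_one_right (abs_nonneg z) (hbound z hz)
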